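/- The Terwilliger algebra T(x₀) of the wreath product K_{n_1} ≀ K_{n_2} ≀ ⋯ ≀ K_{n_d} is isomorphic as a ℂ-algebra to M_{d+1}(ℂ) ⊕ ℂ^{⊕ (d(d+1)/2 − b)}, where b = |{i ∈ {1,…,d} : n_i = 2}|. -/

import Mathlib

open Finset Matrix

/-- Vertex set of the wreath product `K_{n 0} ≀ K_{n 1} ≀ ⋯ ≀ K_{n (d-1)}`
(paper indices `n_1, …, n_d` correspond to `n 0, …, n (d-1)`). -/
abbrev Vx (d : ℕ) (n : ℕ → ℕ) : Type := (i : Fin d) → Fin (n i)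

/-- `delta x y = 0` if `x = y`; otherwise `delta x y` is the largest (1-based)
index at which `x` and `y` differ. -/
def delta {d : ℕ} {n : ℕ → ℕ} (x y : Vx d n) : ℕ :=
  (Finset.univ.filter fun i => x i ≠ y i).sup fun i => (i : ℕ) + 1

/-- The `i`-th adjacency matrix of the wreath product: `(A i) x y = 1` iff `delta x y = i`. -/
noncomputable def A (d : ℕ) (n : ℕ → ℕ) (i : ℕ) : Matrix (Vx d n) (Vx d n) ℂ :=
  Matrix.of fun x y => if delta x y = i then 1 else 0

/-- The valencies: `k 0 = 1` and, for `1 ≤ i`, `k i = n_1 ⋯ n_{i-1} (n_i - 1)`,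
i.e. `k i = n 0 ⋯ n (i-2) * (n (i-1) - 1)`. -/
def k (n : ℕ → ℕ) (i : ℕ) : ℕ :=
  if i = 0 then 1 else (∏ j ∈ Finset.range (i - 1), n j) * (n (i - 1) - 1)

/-- The dual idempotent `E_i*` with respect to the base point `x₀`: the diagonal
0-1 matrix with `(E_i*)_{yy} = 1` iff `delta x₀ y = i`. -/
noncomputable def Es {d : ℕ} {n : ℕ → ℕ} (x₀ : Vx d n) (i : ℕ) :
    Matrix (Vx d n) (Vx d n) ℂ :=
  Matrix.of fun y z => if y = z ∧ delta x₀ y = i then 1 else 0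

/-- The all-ones matrix `J`. -/
noncomputable def Jm (d : ℕ) (n : ℕ → ℕ) : Matrix (Vx d n) (Vx d n) ℂ :=
  Matrix.of fun _ _ => 1

/-- The matrices `G i j`. -/
noncomputable def G {d : ℕ} {n : ℕ → ℕ} (x₀ : Vx d n) (i j : ℕ) :
    Matrix (Vx d n) (Vx d n) ℂ :=
  if i < j then ((k n j : ℂ))⁻¹ • (Es x₀ i * A d n j * Es x₀ j)
  else if j < i then ((k n j : ℂ))⁻¹ • (Es x₀ i * A d n i * Es x₀ j)
  else ((k n i : ℂ))⁻¹ • (Es x₀ i * Jm d n * Es x₀ i)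

/-- The span `U` of the matrices `G i j`, `i, j ∈ [d]`. -/
noncomputable def Uspan {d : ℕ} {n : ℕ → ℕ} (x₀ : Vx d n) :
    Submodule ℂ (Matrix (Vx d n) (Vx d n) ℂ) :=
  Submodule.span ℂ (Set.range fun p : Fin (d + 1) × Fin (d + 1) => G x₀ p.1 p.2)

/-- The Terwilliger algebra of the wreath product with respect to `x₀`. -/
noncomputable def Ter {d : ℕ} {n : ℕ → ℕ} (x₀ : Vx d n) :
    Subalgebra ℂ (Matrix (Vx d n) (Vx d n) ℂ) :=
  Algebra.adjoin ℂ
    ((Set.range fun i : Fin (d + 1) => A d n i) ∪ (Set.range fun i : Fin (d + 1) => Es x₀ i))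

/-- The matrices `F i h`, for `1 ≤ i ≤ d` and `0 ≤ h ≤ i - 1`. -/
noncomputable def F {d : ℕ} {n : ℕ → ℕ} (x₀ : Vx d n) (i h : ℕ) :
    Matrix (Vx d n) (Vx d n) ℂ :=
  if h < i - 1 then
    (∑ j ∈ Finset.range (h + 1), (k n j : ℂ))⁻¹ •
        (∑ j ∈ Finset.range (h + 1), Es x₀ i * A d n j * Es x₀ i)
      - (∑ j ∈ Finset.range (h + 2), (k n j : ℂ))⁻¹ •
          (∑ j ∈ Finset.range (h + 2), Es x₀ i * A d n j * Es x₀ i)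
  else
    (∑ j ∈ Finset.range i, (k n j : ℂ))⁻¹ •
        (∑ j ∈ Finset.range i, Es x₀ i * A d n j * Es x₀ i)
      - G x₀ i i

theorem terHom {R ι κ : Type*} [Ring R] [Algebra ℂ R] [Fintype ι] [DecidableEq ι]
    [Fintype κ] [DecidableEq κ] (g : ι → ι → R) (f : κ → R)
    (hg : ∀ i j l m, g i j * g l m = if j = l then g i m else 0)
    (hf : ∀ a b, f a * f b = if a = b then f a else 0)
    (hgf : ∀ i j a, g i j * f a = 0) (hfg : ∀ a i j, f a * g i j = 0)
    (h1 : ∑ i, g i i + ∑ a, f a = 1)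
    (hg0 : ∀ i j, g i j ≠ 0) (hf0 : ∀ a, f a ≠ 0) :
    ∃ Φ : (Matrix ι ι ℂ × (κ → ℂ)) →ₐ[ℂ] R, Function.Injective Φ ∧
      ∀ p, Φ p = ∑ i, ∑ j, p.1 i j • g i j + ∑ a, p.2 a • f a := by
  let L : (Matrix ι ι ℂ × (κ → ℂ)) →ₗ[ℂ] R :=
    { toFun := fun p => ∑ i, ∑ j, p.1 i j • g i j + ∑ a, p.2 a • f a
      map_add' := by
        intro p q
        simp only [Prod.fst_add, Prod.snd_add, Matrix.add_apply, Pi.add_apply, add_smul,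
          Finset.sum_add_distrib]
        abel
      map_smul' := by
        intro c p
        simp only [Prod.smul_fst, Prod.smul_snd, Matrix.smul_apply, Pi.smul_apply, smul_assoc,
          ← Finset.smul_sum, smul_add, RingHom.id_apply] }
  have hL : ∀ p, L p = ∑ i, ∑ j, p.1 i j • g i j + ∑ a, p.2 a • f a := fun p => rfl
  have hone : L 1 = 1 := by
    rw [hL, ← h1]
    simp [Matrix.one_apply, ite_smul]
  have hmul : ∀ p q, L (p * q) = L p * L q := by
    intro p q
    simp only [hL]
    rw [add_mul, mul_add, mul_add]
    have e1 : (∑ i, ∑ j, p.1 i j • g i j) * (∑ i, ∑ j, q.1 i j • g i j)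
        = ∑ i, ∑ j, (p * q).1 i j • g i j := by
      have hS : ∀ i j, g i j * (∑ l, ∑ m, q.1 l m • g l m) = ∑ m, q.1 j m • g i m := by
        intro i j
        rw [Finset.mul_sum, Finset.sum_eq_single j]
        · simp [Finset.mul_sum, hg]
        · intro b _ hb
          simp [Finset.mul_sum, hg, Ne.symm hb]
        · simp
      rw [Finset.sum_mul]
      refine Finset.sum_congr rfl fun i _ => ?_
      rw [Finset.sum_mul]
      simp only [smul_mul_assoc, hS, Finset.smul_sum, smul_smul, Prod.fst_mul,
        Matrix.mul_apply, Finset.sum_smul]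
      exact Finset.sum_comm
    have e2 : (∑ i, ∑ j, p.1 i j • g i j) * (∑ a, q.2 a • f a) = 0 := by
      simp [Finset.sum_mul, Finset.mul_sum, hgf]
    have e3 : (∑ a, p.2 a • f a) * (∑ i, ∑ j, q.1 i j • g i j) = 0 := by
      simp [Finset.sum_mul, Finset.mul_sum, hfg]
    have e4 : (∑ a, p.2 a • f a) * (∑ a, q.2 a • f a) = ∑ a, (p * q).2 a • f a := by
      simp [Finset.sum_mul, Finset.mul_sum, hf, smul_smul, mul_comm]
    rw [e1, e2, e3, e4]
    simp
  refine ⟨AlgHom.ofLinearMap L hone hmul, ?_, hL⟩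
  rw [injective_iff_map_eq_zero]
  intro p hp
  have hp : L p = 0 := hp
  rw [hL] at hp
  have hc : ∀ a, p.2 a = 0 := by
    intro a
    have := congrArg (fun t => f a * t) hp
    simp only [mul_add, Finset.mul_sum, mul_smul_comm, hfg, hf, smul_zero, Finset.sum_const_zero,
      zero_add, mul_zero, smul_ite, Finset.sum_ite_eq, Finset.mem_univ, if_true] at this
    exact (smul_eq_zero.mp this).resolve_right (hf0 a)
  have hM : ∀ i j, p.1 i j = 0 := by
    intro i j
    have := congrArg (fun t => g i i * t * g j j) hp
    simp only [mul_add, add_mul, Finset.mul_sum, Finset.sum_mul, mul_smul_comm, smul_mul_assoc,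
      hgf, hg, smul_zero, zero_mul, Finset.sum_const_zero,
      add_zero, mul_zero, smul_ite, ite_mul, Finset.sum_ite_irrel,
      Finset.sum_ite_eq, Finset.sum_ite_eq', Finset.mem_univ, if_true] at this
    exact (smul_eq_zero.mp this).resolve_right (hg0 i j)
  ext i j
  · exact hM i j
  · exact hc _

section geo
variable {d : ℕ} {n : ℕ → ℕ}

theorem delta_le_iff (x y : Vx d n) (h : ℕ) :
    delta x y ≤ h ↔ ∀ i : Fin d, h ≤ (i : ℕ) → x i = y i := by
  unfold delta
  rw [Finset.sup_le_iff]
  constructor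
  · intro H i hi
    by_contra hne
    have := H i (by simpa using hne)
    omega
  · intro H i hi
    by_contra hlt
    have hi' : x i ≠ y i := by simpa using hi
    exact hi' (H i (by omega))

theorem delta_comm (x y : Vx d n) : delta x y = delta y x := by
  unfold delta
  simp only [ne_comm]

theorem delta_tri (x y z : Vx d n) (h : ℕ) (h1 : delta x y ≤ h) (h2 : delta y z ≤ h) :
    delta x z ≤ h := by
  rw [delta_le_iff] at *
  intro i hi
  exact (h1 i hi).trans (h2 i hi)

theorem delta_le (x y : Vx d n) : delta x y ≤ d := by
  rw [delta_le_iff]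
  intro i hi
  have := i.2
  omega

theorem delta_zero_iff (x y : Vx d n) : delta x y ≤ 0 ↔ x = y := by
  rw [delta_le_iff]
  constructor
  · intro H; funext i; exact H i (Nat.zero_le _)
  · intro H; simp [H]

/-- ball sizes -/
def NN (d : ℕ) (n : ℕ → ℕ) (h : ℕ) : ℕ := ∏ i : Fin d, if h ≤ (i : ℕ) then 1 else n i

theorem card_ball (y : Vx d n) (h : ℕ) :
    (Finset.univ.filter fun z => delta y z ≤ h).card = NN d n h := by
  have : (Finset.univ.filter fun z => delta y z ≤ h)
      = Fintype.piFinset (fun i : Fin d => if h ≤ (i : ℕ) then {y i} else Finset.univ) := by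
    ext z
    simp only [Finset.mem_filter, Finset.mem_univ, true_and, Fintype.mem_piFinset, delta_le_iff]
    refine forall_congr' fun i => ?_
    by_cases hi : h ≤ (i : ℕ)
    · simp [hi, eq_comm]
    · simp [hi]
  rw [this, Fintype.card_piFinset, NN]
  refine Finset.prod_congr rfl fun i _ => ?_
  split_ifs <;> simp

theorem NN_ne (x₀ : Vx d n) (h : ℕ) : (NN d n h : ℂ) ≠ 0 := by
  rw [← card_ball x₀ h]
  simp only [ne_eq, Nat.cast_eq_zero, Finset.card_eq_zero]
  refine Finset.ne_empty_of_mem (a := x₀) ?_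
  simp [(delta_zero_iff x₀ x₀).2 rfl |> Nat.le_zero.mp]

/-- ball matrices -/
noncomputable def BB (d : ℕ) (n : ℕ → ℕ) (h : ℕ) : Matrix (Vx d n) (Vx d n) ℂ :=
  Matrix.of fun x y => if delta x y ≤ h then 1 else 0

/-- layer indicator -/
noncomputable def uu (x₀ : Vx d n) (i : ℕ) : Vx d n → ℂ := fun y => if delta x₀ y = i then 1 else 0

/-- layer size -/
noncomputable def LL (x₀ : Vx d n) (i : ℕ) : ℕ := (Finset.univ.filter fun y => delta x₀ y = i).card

theorem same_layer (x₀ y z : Vx d n) (i h : ℕ) (hi : h < i) (hy : delta x₀ y = i)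
    (hz : delta y z ≤ h) : delta x₀ z = i := by
  apply le_antisymm
  · exact delta_tri _ y _ _ hy.le (by omega)
  · by_contra hlt
    have := delta_tri x₀ z y (i-1) (by omega) (by rw [delta_comm]; omega)
    omega

theorem Es_diag (x₀ : Vx d n) (i : ℕ) : Es x₀ i = Matrix.diagonal (uu x₀ i) := by
  ext y z
  simp only [Es, uu, Matrix.of_apply, Matrix.diagonal_apply]
  split_ifs <;> simp_all

theorem BB_mul (h g : ℕ) (hg : h ≤ g) : BB d n h * BB d n g = (NN d n h : ℂ) • BB d n g := by
  ext y z
  simp only [Matrix.mul_apply, BB, Matrix.of_apply, Matrix.smul_apply, smul_eq_mul]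
  rw [← card_ball y h, Finset.card_filter, Nat.cast_sum, Finset.sum_mul]
  refine Finset.sum_congr rfl fun w _ => ?_
  by_cases hw : delta y w ≤ h
  · have : delta w z ≤ g ↔ delta y z ≤ g := by
      constructor
      · intro H; exact delta_tri _ w _ _ (hw.trans hg) H
      · intro H; exact delta_tri _ y _ _ (by rw [delta_comm]; exact hw.trans hg) H
    simp [hw, this]
  · simp [hw]

theorem BB_tr (h : ℕ) : (BB d n h)ᵀ = BB d n h := by
  ext y z
  simp [BB, delta_comm]

theorem BB_mul' (h g : ℕ) (hg : h ≤ g) : BB d n g * BB d n h = (NN d n h : ℂ) • BB d n g := by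
  have := congrArg Matrix.transpose (BB_mul (d := d) (n := n) h g hg)
  simpa [Matrix.transpose_mul, BB_tr] using this

theorem Es_BB_comm (x₀ : Vx d n) (i h : ℕ) (hi : h < i) :
    Es x₀ i * BB d n h = BB d n h * Es x₀ i := by
  rw [Es_diag]
  ext y z
  rw [Matrix.diagonal_mul, Matrix.mul_diagonal]
  simp only [uu, BB, Matrix.of_apply]
  by_cases hw : delta y z ≤ h
  · have : delta x₀ y = i ↔ delta x₀ z = i :=
      ⟨fun H => same_layer x₀ y z i h hi H hw,
       fun H => same_layer x₀ z y i h hi H (by rwa [delta_comm])⟩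
    simp [this, hw]
  · simp [hw]

theorem Es_mul (x₀ : Vx d n) (i j : ℕ) :
    Es x₀ i * Es x₀ j = if i = j then Es x₀ i else 0 := by
  simp only [Es_diag, Matrix.diagonal_mul_diagonal]
  split_ifs with h
  · subst h; congr 1; funext y; simp [uu]
  · rw [← Matrix.diagonal_zero]; congr 1; funext y
    simp only [uu]; split_ifs <;> simp_all

theorem uu_dot (x₀ : Vx d n) (i j : ℕ) :
    uu x₀ i ⬝ᵥ uu x₀ j = if i = j then (LL x₀ i : ℂ) else 0 := by
  split_ifs with h
  · subst h; simp only [uu, dotProduct, LL, Finset.card_filter, Nat.cast_sum]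
    refine Finset.sum_congr rfl fun y _ => ?_
    split_ifs <;> simp
  · refine Finset.sum_eq_zero fun y _ => ?_
    simp only [uu]; split_ifs <;> simp_all

/-- matrix units -/
noncomputable def gg (x₀ : Vx d n) (i j : ℕ) : Matrix (Vx d n) (Vx d n) ℂ :=
  (LL x₀ j : ℂ)⁻¹ • Matrix.vecMulVec (uu x₀ i) (uu x₀ j)

/-- averaging idempotents -/
noncomputable def PP (x₀ : Vx d n) (i h : ℕ) : Matrix (Vx d n) (Vx d n) ℂ :=
  if h < i then (NN d n h : ℂ)⁻¹ • (Es x₀ i * BB d n h) else gg x₀ i i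

/-- differences -/
noncomputable def ff (x₀ : Vx d n) (i h : ℕ) : Matrix (Vx d n) (Vx d n) ℂ :=
  PP x₀ i h - PP x₀ i (h + 1)

theorem LL_exists (hn : ∀ i < d, 2 ≤ n i) (x₀ : Vx d n) (i : ℕ) (hi : i ≤ d) :
    ∃ y, delta x₀ y = i := by
  rcases Nat.eq_zero_or_pos i with h0 | h0
  · exact ⟨x₀, by subst h0; exact Nat.le_zero.mp ((delta_zero_iff _ _).2 rfl)⟩
  · have hlt : i - 1 < d := by omega
    haveI : Nontrivial (Fin (n (i-1))) := Fin.nontrivial_iff_two_le.mpr (hn _ hlt)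
    obtain ⟨v, hv⟩ := exists_ne (x₀ ⟨i - 1, hlt⟩)
    refine ⟨Function.update x₀ ⟨i-1, hlt⟩ v, le_antisymm ?_ ?_⟩
    · rw [delta_le_iff]
      intro j hj
      rw [Function.update_of_ne]
      intro H; rw [H] at hj; simp at hj; omega
    · by_contra hlt'
      have := (delta_le_iff x₀ _ (i-1)).1 (by omega : delta x₀ (Function.update x₀ ⟨i-1, hlt⟩ v) ≤ i - 1)
        ⟨i-1, hlt⟩ le_rfl
      rw [Function.update_self] at this
      exact hv this.symm

theorem LL_ne (hn : ∀ i < d, 2 ≤ n i) (x₀ : Vx d n) (i : ℕ) (hi : i ≤ d) :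
    (LL x₀ i : ℂ) ≠ 0 := by
  obtain ⟨y, hy⟩ := LL_exists hn x₀ i hi
  simp only [LL, ne_eq, Nat.cast_eq_zero, Finset.card_eq_zero]
  exact Finset.ne_empty_of_mem (a := y) (by simp [hy])

theorem gg_mul (hn : ∀ i < d, 2 ≤ n i) (x₀ : Vx d n) (i j l m : ℕ) (hj : j ≤ d) :
    gg x₀ i j * gg x₀ l m = if j = l then gg x₀ i m else 0 := by
  have := LL_ne hn x₀ j hj
  unfold gg
  rw [smul_mul_smul_comm, Matrix.vecMulVec_mul_vecMulVec, uu_dot]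
  split_ifs with h
  · subst h
    rw [Matrix.vecMulVec_smul, smul_smul]
    congr 1
    field_simp
  · simp

theorem EB_uu (x₀ : Vx d n) (i h j : ℕ) (hi : h < i) :
    (Es x₀ i * BB d n h) *ᵥ uu x₀ j = if i = j then (NN d n h : ℂ) • uu x₀ j else 0 := by
  rw [Es_BB_comm x₀ i h hi, ← Matrix.mulVec_mulVec]
  have e : Es x₀ i *ᵥ uu x₀ j = if i = j then uu x₀ j else 0 := by
    rw [Es_diag]
    funext y
    rw [Matrix.mulVec_diagonal]
    by_cases hij : i = j
    · subst hij; simp [uu]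
    · simp only [uu, hij, if_false, Pi.zero_apply]; split_ifs <;> simp_all
  rw [e]
  split_ifs with hij
  · subst hij
    funext y
    simp only [Matrix.mulVec, dotProduct, BB, Matrix.of_apply, uu, Pi.smul_apply, smul_eq_mul]
    rw [← card_ball y h, Finset.card_filter, Nat.cast_sum, Finset.sum_mul]
    refine Finset.sum_congr rfl fun z _ => ?_
    by_cases hw : delta y z ≤ h
    · have : delta x₀ y = i ↔ delta x₀ z = i :=
        ⟨fun H => same_layer x₀ y z i h hi H hw,
         fun H => same_layer x₀ z y i h hi H (by rwa [delta_comm])⟩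
      simp [this]
    · simp [hw]
  · simp

theorem PP_tr (x₀ : Vx d n) (i h : ℕ) : (PP x₀ i h)ᵀ = PP x₀ i h := by
  unfold PP
  split_ifs with hi
  · rw [Matrix.transpose_smul, Matrix.transpose_mul, BB_tr, Es_BB_comm x₀ i h hi]
    simp [Es_diag]
  · simp [gg]

theorem PP_uu (hn : ∀ i < d, 2 ≤ n i) (x₀ : Vx d n) (i h j : ℕ) (hid : i ≤ d) :
    PP x₀ i h *ᵥ uu x₀ j = if i = j then uu x₀ j else 0 := by
  unfold PP
  split_ifs with hi hij hij
  · rw [Matrix.smul_mulVec, EB_uu _ _ _ _ hi, if_pos hij, smul_smul,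
      inv_mul_cancel₀ (NN_ne x₀ h), one_smul]
  · rw [Matrix.smul_mulVec, EB_uu _ _ _ _ hi, if_neg hij, smul_zero]
  · subst hij
    rw [gg, Matrix.smul_mulVec, Matrix.vecMulVec_mulVec, uu_dot, if_pos rfl]
    have := LL_ne hn x₀ i hid
    funext y
    simp
    field_simp
  · rw [gg, Matrix.smul_mulVec, Matrix.vecMulVec_mulVec, uu_dot, if_neg hij]
    simp

theorem PP_gg (hn : ∀ i < d, 2 ≤ n i) (x₀ : Vx d n) (i h j l : ℕ) (hid : i ≤ d) :
    PP x₀ i h * gg x₀ j l = if i = j then gg x₀ j l else 0 := by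
  rw [gg, mul_smul_comm, Matrix.mul_vecMulVec, PP_uu hn x₀ i h j hid]
  split_ifs <;> simp

theorem gg_PP (hn : ∀ i < d, 2 ≤ n i) (x₀ : Vx d n) (i h j l : ℕ) (hid : i ≤ d) :
    gg x₀ j l * PP x₀ i h = if i = l then gg x₀ j l else 0 := by
  rw [gg, smul_mul_assoc, Matrix.vecMulVec_mul, ← Matrix.mulVec_transpose, PP_tr,
    PP_uu hn x₀ i h l hid]
  split_ifs <;> simp

theorem PP_PP (hn : ∀ i < d, 2 ≤ n i) (x₀ : Vx d n) (i h j g : ℕ) (hid : i ≤ d) (hjd : j ≤ d) :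
    PP x₀ i h * PP x₀ j g = if i = j then PP x₀ i (max h g) else 0 := by
  by_cases hg : g < j
  · by_cases hh : h < i
    · rw [PP, PP, if_pos hg, if_pos hh, smul_mul_smul_comm, Es_BB_comm x₀ i h hh,
        mul_assoc, ← mul_assoc (Es x₀ i), Es_mul]
      split_ifs with hij
      · subst hij
        rw [← mul_assoc, ← Es_BB_comm x₀ i h hh, mul_assoc, PP, if_pos (max_lt hh hg)]
        have e1 := NN_ne x₀ h
        have e2 := NN_ne x₀ g
        rcases le_total h g with H | H
        · rw [BB_mul _ _ H, max_eq_right H, mul_smul_comm, smul_smul]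
          congr 1
          field_simp
        · rw [BB_mul' _ _ H, max_eq_left H, mul_smul_comm, smul_smul]
          congr 1
          field_simp
      · simp
    · have : PP x₀ i h = gg x₀ i i := if_neg hh
      rw [this, gg_PP hn _ _ _ _ _ hjd]
      by_cases hij : i = j
      · subst hij
        rw [if_pos rfl, if_pos rfl, PP, if_neg (by omega)]
      · rw [if_neg (Ne.symm hij), if_neg hij]
  · have : PP x₀ j g = gg x₀ j j := if_neg hg
    rw [this, PP_gg hn _ _ _ _ _ hid]
    split_ifs with hij
    · subst hij
      rw [PP, if_neg (by omega)]
    · rfl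

theorem ff_ff (hn : ∀ i < d, 2 ≤ n i) (x₀ : Vx d n) (i h j g : ℕ) (hid : i ≤ d) (hjd : j ≤ d) :
    ff x₀ i h * ff x₀ j g = if i = j ∧ h = g then ff x₀ i h else 0 := by
  unfold ff
  simp only [sub_mul, mul_sub, PP_PP hn x₀ _ _ _ _ hid hjd]
  by_cases hij : i = j
  · subst hij
    simp only [if_true, true_and]
    rcases lt_trichotomy h g with H | H | H
    · rw [max_eq_right (by omega), max_eq_right (by omega), max_eq_right (by omega),
        max_eq_right (by omega), if_neg (by omega)]
      abel
    · subst H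
      simp
    · rw [max_eq_left (by omega), max_eq_left (by omega), max_eq_left (by omega),
        max_eq_left (by omega), if_neg (by omega)]
      abel
  · simp [hij]

theorem PP_zero (x₀ : Vx d n) (i : ℕ) : PP x₀ i 0 = Es x₀ i := by
  have hB : BB d n 0 = 1 := by
    ext y z
    simp only [BB, Matrix.of_apply, delta_zero_iff, Matrix.one_apply]
  have hN : NN d n 0 = 1 := by simp [NN]
  unfold PP
  split_ifs with hi
  · simp [hB, hN]
  · obtain rfl : i = 0 := by omega
    have : LL x₀ 0 = 1 := by
      have := card_ball x₀ 0
      rw [hN] at this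
      simpa [LL] using this
    rw [gg, this, Es_diag]
    ext y z
    have h1 := delta_zero_iff x₀ y
    have h2 := delta_zero_iff x₀ z
    simp only [Nat.le_zero] at h1 h2
    simp only [uu, Matrix.vecMulVec, h1, h2, Matrix.diagonal_apply, Matrix.smul_apply, Matrix.of_apply]
    by_cases hy : x₀ = y <;> by_cases hz : x₀ = z <;> simp [hy, hz] <;> aesop

theorem sum_Es (x₀ : Vx d n) : ∑ i ∈ Finset.range (d + 1), Es x₀ i = 1 := by
  ext y z
  rw [Matrix.sum_apply]
  simp only [Es, Matrix.of_apply, Matrix.one_apply]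
  by_cases h : y = z
  · subst h
    simp
    exact delta_le _ _
  · simp [h]

theorem sum_ff (x₀ : Vx d n) (i : ℕ) :
    ∑ h ∈ Finset.range i, ff x₀ i h = Es x₀ i - gg x₀ i i := by
  unfold ff
  rw [Finset.sum_range_sub', PP_zero]
  congr 1
  simp [PP]

theorem PP_apply (x₀ : Vx d n) (i h : ℕ) (y z : Vx d n) (hy : delta x₀ y = i) (hz : delta x₀ z = i) :
    PP x₀ i h y z = if h < i then (if delta y z ≤ h then (NN d n h : ℂ)⁻¹ else 0)
      else (LL x₀ i : ℂ)⁻¹ := by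
  unfold PP
  split_ifs with h1 h2
  · rw [Es_diag, Matrix.smul_apply, Matrix.diagonal_mul]; simp [uu, hy, BB, h2]
  · rw [Es_diag, Matrix.smul_apply, Matrix.diagonal_mul]; simp [uu, hy, BB, h2]
  · simp [gg, Matrix.vecMulVec, uu, hy, hz]

theorem ff_ne (hn : ∀ i < d, 2 ≤ n i) (x₀ : Vx d n) (i h : ℕ) (hid : i ≤ d) (hh : h < i)
    (hb : ¬ (h + 1 = i ∧ n h = 2)) : ff x₀ i h ≠ 0 := by
  intro H
  have key : ∃ y z, delta x₀ y = i ∧ delta x₀ z = i ∧ delta y z = h + 1 := by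
    rcases Nat.lt_or_ge (h + 1) i with hlt | hge
    · obtain ⟨y, hy⟩ := LL_exists hn x₀ i hid
      obtain ⟨z, hz⟩ := LL_exists hn y (h+1) (by omega)
      exact ⟨y, z, hy, same_layer x₀ y z i (h+1) hlt hy hz.le, hz⟩
    · have hi : h + 1 = i := by omega
      have h3 : 3 ≤ n h := by
        have := hn h (by omega)
        have : n h ≠ 2 := fun e => hb ⟨hi, e⟩
        omega
      have hlt : h < d := by omega
      let j : Fin d := ⟨h, hlt⟩
      have up : ∀ (x : Vx d n) (v w : Fin (n j)), v ≠ w →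
          delta (Function.update x j v) (Function.update x j w) = h + 1 := by
        intro x v w hvw
        apply le_antisymm
        · rw [delta_le_iff]
          intro t ht
          have : t ≠ j := by intro e; rw [e] at ht; simp [j] at ht
          rw [Function.update_of_ne this, Function.update_of_ne this]
        · by_contra hl
          have := (delta_le_iff (Function.update x j v) (Function.update x j w) h).1 (by omega)
            j le_rfl
          simp at this
          exact hvw this
      obtain ⟨v, hv⟩ : ∃ v, v ∉ ({x₀ j} : Finset (Fin (n j))) := by
        by_contra hc
        push Not at hc
        have := Finset.card_le_card (fun v _ => hc v : (Finset.univ : Finset (Fin (n j))) ⊆ _)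
        simp [j] at this
        omega
      obtain ⟨w, hw⟩ : ∃ w, w ∉ ({x₀ j, v} : Finset (Fin (n j))) := by
        by_contra hc
        push Not at hc
        have := Finset.card_le_card (fun v _ => hc v : (Finset.univ : Finset (Fin (n j))) ⊆ _)
        have h4 := this.trans Finset.card_le_two
        simp [j] at h4
        omega
      simp only [Finset.mem_singleton, Finset.mem_insert, not_or] at hv hw
      refine ⟨Function.update x₀ j v, Function.update x₀ j w, ?_, ?_, up _ _ _ (Ne.symm hw.2)⟩
      · have := up x₀ (x₀ j) v (Ne.symm hv)
        rw [Function.update_eq_self] at this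
        omega
      · have := up x₀ (x₀ j) w (Ne.symm hw.1)
        rw [Function.update_eq_self] at this
        omega
  obtain ⟨y, z, hy, hz, hyz⟩ := key
  have := congrFun (congrFun H y) z
  rw [ff, Matrix.sub_apply, PP_apply x₀ i h y z hy hz, PP_apply x₀ i (h+1) y z hy hz, if_pos hh,
    if_neg (by omega), if_pos (by omega : delta y z ≤ h + 1)] at this
  have e1 := NN_ne x₀ (h+1)
  have e2 := LL_ne hn x₀ i hid
  split_ifs at this <;> simp_all

theorem ff_eq_zero (hn : ∀ i < d, 2 ≤ n i) (x₀ : Vx d n) (h : ℕ) (hid : h < d)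
    (h2 : n h = 2) : ff x₀ (h + 1) h = 0 := by
  have key : ∀ y z, delta x₀ y = h + 1 → delta x₀ z = h + 1 → delta y z ≤ h := by
    intro y z hy hz
    have hyz : delta y z ≤ h + 1 := delta_tri _ x₀ _ _ (by rw [delta_comm]; omega) hz.le
    rw [delta_le_iff] at hyz ⊢
    intro i hi
    rcases Nat.lt_or_ge h i with hlt | hge
    · exact hyz i hlt
    · have hih : (i : ℕ) = h := by omega
      have aux : ∀ w, delta x₀ w = h + 1 → x₀ i ≠ w i := by
        intro w hw e
        have : delta x₀ w ≤ h := by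
          rw [delta_le_iff]
          intro t ht
          rcases Nat.lt_or_ge h t with hlt' | hge'
          · exact (delta_le_iff x₀ w (h+1)).1 hw.le t hlt'
          · have : t = i := Fin.ext (by omega)
            rw [this]; exact e
        omega
      have a1 := aux y hy
      have a2 := aux z hz
      have b0 := (x₀ i).2
      have b1 := (y i).2
      have b2 := (z i).2
      have hni : n i = 2 := by rw [hih]; exact h2
      rw [ne_eq, Fin.ext_iff] at a1 a2
      apply Fin.ext
      omega
  have hL : LL x₀ (h + 1) = NN d n h := by
    obtain ⟨y, hy⟩ := LL_exists hn x₀ (h+1) (by omega)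
    rw [← card_ball y h, LL]
    congr 1
    ext z
    simp only [Finset.mem_filter, Finset.mem_univ, true_and]
    exact ⟨fun hz => key y z hy hz, fun hz => same_layer x₀ y z (h+1) h (by omega) hy hz⟩
  rw [ff, sub_eq_zero, PP, PP, if_pos (by omega), if_neg (by omega), gg, hL]
  congr 1
  rw [Es_diag]
  ext y z
  rw [Matrix.diagonal_mul]
  simp only [uu, BB, Matrix.of_apply, Matrix.vecMulVec]
  by_cases hy : delta x₀ y = h + 1
  · have : delta y z ≤ h ↔ delta x₀ z = h + 1 :=
      ⟨fun hz => same_layer x₀ y z (h+1) h (by omega) hy hz, fun hz => key y z hy hz⟩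
    simp [hy, this]
  · simp [hy]

theorem A_eq_zero : A d n 0 = BB d n 0 := by
  ext y z; simp [A, BB]

theorem A_eq_succ (j : ℕ) : A d n (j + 1) = BB d n (j + 1) - BB d n j := by
  ext y z
  simp only [A, BB, Matrix.of_apply, Matrix.sub_apply]
  split_ifs <;> first | omega | simp

theorem BB_eq_sum (h : ℕ) : BB d n h = ∑ j ∈ Finset.range (h + 1), A d n j := by
  induction h with
  | zero => simp [A_eq_zero]
  | succ h ih => rw [Finset.sum_range_succ, ← ih, A_eq_succ]; abel

theorem gg_eq (x₀ : Vx d n) (i j : ℕ) :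
    gg x₀ i j = (LL x₀ j : ℂ)⁻¹ • (Es x₀ i * BB d n d * Es x₀ j) := by
  rw [gg]
  congr 1
  rw [Es_diag, Es_diag]
  ext y z
  rw [Matrix.mul_diagonal, Matrix.diagonal_mul]
  simp [Matrix.vecMulVec, BB, delta_le]

theorem Es_BB_low (hn : ∀ i < d, 2 ≤ n i) (x₀ : Vx d n) (i h : ℕ) (hid : i ≤ d) (hd : h ≤ d)
    (hi : i ≤ h) :
    Es x₀ i * BB d n h = ∑ l ∈ Finset.range (h + 1), (LL x₀ l : ℂ) • gg x₀ i l := by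
  have : ∀ l ∈ Finset.range (h + 1), (LL x₀ l : ℂ) • gg x₀ i l
      = Matrix.vecMulVec (uu x₀ i) (uu x₀ l) := by
    intro l hl
    rw [Finset.mem_range] at hl
    rw [gg, smul_smul, mul_inv_cancel₀ (LL_ne hn x₀ l (by omega)), one_smul]
  rw [Finset.sum_congr rfl this, Es_diag]
  ext y z
  rw [Matrix.diagonal_mul, Matrix.sum_apply]
  simp only [Matrix.vecMulVec, Matrix.of_apply, uu, BB]
  by_cases hy : delta x₀ y = i
  · have : delta y z ≤ h ↔ delta x₀ z < h + 1 := by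
      constructor
      · intro H; exact Nat.lt_succ_of_le (delta_tri _ y _ _ (by omega) H)
      · intro H; exact delta_tri _ x₀ _ _ (by rw [delta_comm]; omega) (by omega)
    simp [hy, this]
  · simp [hy]

end geo

theorem card_idx (d : ℕ) (n : ℕ → ℕ) :
    Fintype.card {p : (Σ i : Fin d, Fin ((i : ℕ) + 1)) // ¬ ((p.2 : ℕ) = p.1 ∧ n p.1 = 2)}
      = d * (d + 1) / 2 - ((Finset.range d).filter fun i => n i = 2).card := by
  rw [Fintype.card_subtype_compl]
  congr 1
  · rw [Fintype.card_sigma]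
    simp only [Fintype.card_fin]
    rw [Fin.sum_univ_eq_sum_range (fun i => i + 1) d]
    have := Finset.sum_range_succ' (fun i => i) d
    have h2 := Finset.sum_range_id (d + 1)
    simp at this h2
    rw [← this, h2, mul_comm]
  · rw [Fintype.card_subtype]
    refine Finset.card_bij (fun p _ => (p.1 : ℕ)) ?_ ?_ ?_
    · intro p hp
      simp at hp ⊢
      exact hp.2
    · rintro ⟨i, a⟩ hp ⟨j, b⟩ hq e
      simp at hp hq e
      obtain rfl : i = j := Fin.ext e
      have : a = b := Fin.ext (by omega)
      rw [this]
    · intro b hb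
      simp at hb
      exact ⟨⟨⟨b, hb.1⟩, ⟨b, by simp⟩⟩, by simp [hb.2], rfl⟩

/-- the Terwilliger algebra `T(x₀)` of `K_{n_1} ≀ ⋯ ≀ K_{n_d}` is
isomorphic as a ℂ-algebra to `M_{d+1}(ℂ) ⊕ ℂ^{d(d+1)/2 - b}`, where
`b = |{i : n_i = 2}|`. -/
theorem stmt6 (d : ℕ) (hd : 1 ≤ d) (n : ℕ → ℕ) (hn : ∀ i < d, 2 ≤ n i)
    (x₀ : Vx d n) :
    Nonempty
      ((Ter x₀) ≃ₐ[ℂ]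
        (Matrix (Fin (d + 1)) (Fin (d + 1)) ℂ ×
          (Fin (d * (d + 1) / 2 - ((Finset.range d).filter fun i => n i = 2).card) → ℂ))) := by
  classical
  let K := {p : (Σ i : Fin d, Fin ((i : ℕ) + 1)) // ¬ ((p.2 : ℕ) = p.1 ∧ n p.1 = 2)}
  let e : Fin (d * (d + 1) / 2 - ((Finset.range d).filter fun i => n i = 2).card) ≃ K :=
    (Fintype.equivFinOfCardEq (card_idx d n)).symm
  let f0 : (Σ i : Fin d, Fin ((i : ℕ) + 1)) → Matrix (Vx d n) (Vx d n) ℂ :=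
    fun p => ff x₀ ((p.1 : ℕ) + 1) p.2
  have hfz : ∀ p : (Σ i : Fin d, Fin ((i : ℕ) + 1)), ((p.2 : ℕ) = p.1 ∧ n p.1 = 2) → f0 p = 0 := by
    rintro p ⟨h1, h2⟩
    simp only [f0]
    rw [h1]
    exact ff_eq_zero hn x₀ _ p.1.2 h2
  have hle : ∀ i : Fin (d + 1), (i : ℕ) ≤ d := fun i => Nat.lt_succ_iff.mp i.2
  obtain ⟨Φ, hinj, hΦ⟩ := terHom (fun i j : Fin (d + 1) => gg x₀ i j) (fun a => f0 (e a).1)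
    (by
      intro i j l m
      simp only [gg_mul hn x₀ _ _ _ _ (hle j), Fin.ext_iff])
    (by
      intro a b
      simp only [f0]
      rw [ff_ff hn x₀ _ _ _ _ (by have := (e a).1.1.2; omega) (by have := (e b).1.1.2; omega)]
      by_cases hab : a = b
      · subst hab; simp
      · rw [if_neg hab, if_neg]
        rintro ⟨h1, h2⟩
        apply hab
        apply e.injective
        apply Subtype.ext
        have : ∀ p q : (Σ i : Fin d, Fin ((i : ℕ) + 1)),
            (p.1 : ℕ) + 1 = q.1 + 1 → (p.2 : ℕ) = q.2 → p = q := by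
          rintro ⟨i, a⟩ ⟨j, b⟩ h1 h2
          simp at h1 h2
          obtain rfl : i = j := Fin.ext h1
          rw [Fin.ext h2]
        exact this _ _ h1 h2)
    (by
      intro i j a
      have := (e a).1.1.2
      simp only [f0, ff, mul_sub, gg_PP hn x₀ _ _ _ _ (by omega : ((e a).1.1 : ℕ) + 1 ≤ d), sub_self])
    (by
      intro a i j
      have := (e a).1.1.2
      simp only [f0, ff, sub_mul, PP_gg hn x₀ _ _ _ _ (by omega : ((e a).1.1 : ℕ) + 1 ≤ d), sub_self])
    (by
      have s1 : ∑ a, f0 (e a).1 = ∑ p, f0 p := by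
        rw [Equiv.sum_comp e (fun q => f0 q.1)]
        have hs := Finset.sum_subtype (F := inferInstance) (p := fun p : (Σ i : Fin d, Fin ((i : ℕ) + 1)) =>
            ¬ ((p.2 : ℕ) = p.1 ∧ n p.1 = 2))
          (Finset.univ.filter fun p : (Σ i : Fin d, Fin ((i : ℕ) + 1)) =>
            ¬ ((p.2 : ℕ) = p.1 ∧ n p.1 = 2)) (by simp) f0
        rw [← hs]
        refine Finset.sum_subset (Finset.filter_subset _ _) ?_
        intro p _ hp
        apply hfz
        by_contra hc
        exact hp (Finset.mem_filter.mpr ⟨Finset.mem_univ _, hc⟩)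
      rw [s1, Fintype.sum_sigma]
      have s2 : ∀ i : Fin d, ∑ h : Fin ((i : ℕ) + 1), f0 ⟨i, h⟩
          = Es x₀ ((i : ℕ) + 1) - gg x₀ ((i : ℕ) + 1) ((i : ℕ) + 1) := by
        intro i
        simp only [f0]
        rw [Fin.sum_univ_eq_sum_range (fun h => ff x₀ ((i : ℕ) + 1) h), sum_ff]
      rw [Finset.sum_congr rfl fun i _ => s2 i,
        Fin.sum_univ_eq_sum_range (fun i => Es x₀ (i + 1) - gg x₀ (i + 1) (i + 1)),
        Fin.sum_univ_eq_sum_range (fun i => gg x₀ i i), Finset.sum_range_succ', ← sum_Es x₀,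
        Finset.sum_range_succ', Finset.sum_sub_distrib, ← PP_zero x₀ 0]
      have : PP x₀ 0 0 = gg x₀ 0 0 := by simp [PP]
      rw [this]
      abel)
    (by
      intro i j H
      obtain ⟨y, hy⟩ := LL_exists hn x₀ i (hle i)
      obtain ⟨z, hz⟩ := LL_exists hn x₀ j (hle j)
      have := congrFun (congrFun H y) z
      have hl := LL_ne hn x₀ j (hle j)
      simp [gg, Matrix.vecMulVec, uu, hy, hz] at this
      exact hl (by exact_mod_cast this))
    (by
      intro a
      have h1 := (e a).1.1.2
      have h2 := (e a).1.2.2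
      refine ff_ne hn x₀ _ _ (by omega) (by omega) ?_
      rintro ⟨h3, h4⟩
      have h5 : ((e a).1.2 : ℕ) = (e a).1.1 := by omega
      exact (e a).2 ⟨h5, by rw [← h5]; exact h4⟩)
  -- membership in the range
  have mg : ∀ i j, i ≤ d → j ≤ d → gg x₀ i j ∈ Φ.range := by
    intro i j hi hj
    refine ⟨(Matrix.single ⟨i, by omega⟩ ⟨j, by omega⟩ 1, 0), ?_⟩
    change Φ _ = _
    rw [hΦ]
    simp only [Pi.zero_apply, zero_smul, Finset.sum_const_zero, add_zero]
    rw [Finset.sum_eq_single ⟨i, by omega⟩, Finset.sum_eq_single ⟨j, by omega⟩]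
    · simp
    · intro b _ hb
      simp [Matrix.single_apply, Ne.symm hb]
    · simp
    · intro b _ hb
      refine Finset.sum_eq_zero fun c _ => ?_
      simp [Matrix.single_apply, Ne.symm hb]
    · simp
  have mf : ∀ i h, i ≤ d → h < i → ff x₀ i h ∈ Φ.range := by
    intro i h hi hh
    obtain ⟨i, rfl⟩ : ∃ t, i = t + 1 := ⟨i - 1, by omega⟩
    let p : (Σ i : Fin d, Fin ((i : ℕ) + 1)) := ⟨⟨i, by omega⟩, ⟨h, hh⟩⟩
    have hp : ff x₀ (i + 1) h = f0 p := rfl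
    rw [hp]
    by_cases hc : ((p.2 : ℕ) = p.1 ∧ n p.1 = 2)
    · rw [hfz p hc]; exact zero_mem _
    · refine ⟨(0, Pi.single (e.symm ⟨p, hc⟩) 1), ?_⟩
      change Φ _ = _
      rw [hΦ]
      simp only [Matrix.zero_apply, zero_smul, Finset.sum_const_zero, zero_add]
      rw [Finset.sum_eq_single (e.symm ⟨p, hc⟩)]
      · simp
      · intro b _ hb
        simp [hb]
      · simp
  have mP : ∀ i, i ≤ d → ∀ t h, h + t = i → PP x₀ i h ∈ Φ.range := by
    intro i hi t
    induction t with
    | zero =>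
      intro h hh
      rw [PP, if_neg (by omega)]
      exact mg i i hi hi
    | succ t ih =>
      intro h hh
      have : PP x₀ i h = ff x₀ i h + PP x₀ i (h + 1) := by rw [ff]; abel
      rw [this]
      exact add_mem (mf i h hi (by omega)) (ih (h + 1) (by omega))
  have mE : ∀ i, i ≤ d → Es x₀ i ∈ Φ.range := by
    intro i hi
    rw [← PP_zero]
    exact mP i hi i 0 (by omega)
  have mB : ∀ h, h ≤ d → BB d n h ∈ Φ.range := by
    intro h hh
    rw [← one_mul (BB d n h), ← sum_Es x₀, Finset.sum_mul]
    refine sum_mem fun i hi => ?_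
    rw [Finset.mem_range] at hi
    by_cases hih : h < i
    · have : Es x₀ i * BB d n h = (NN d n h : ℂ) • PP x₀ i h := by
        rw [PP, if_pos hih, smul_smul, mul_inv_cancel₀ (NN_ne x₀ h), one_smul]
      rw [this]
      exact Subalgebra.smul_mem _ (mP i (by omega) (i - h) h (by omega)) _
    · rw [Es_BB_low hn x₀ i h (by omega) hh (by omega)]
      refine sum_mem fun l hl => ?_
      rw [Finset.mem_range] at hl
      exact Subalgebra.smul_mem _ (mg i l (by omega) (by omega)) _
  -- membership in the Terwilliger algebra
  have tA : ∀ i, i ≤ d → A d n i ∈ Ter x₀ := fun i hi =>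
    Algebra.subset_adjoin (Or.inl ⟨⟨i, by omega⟩, rfl⟩)
  have tE : ∀ i, i ≤ d → Es x₀ i ∈ Ter x₀ := fun i hi =>
    Algebra.subset_adjoin (Or.inr ⟨⟨i, by omega⟩, rfl⟩)
  have tB : ∀ h, h ≤ d → BB d n h ∈ Ter x₀ := by
    intro h hh
    rw [BB_eq_sum]
    refine sum_mem fun j hj => tA j ?_
    rw [Finset.mem_range] at hj
    omega
  have tg : ∀ i j, i ≤ d → j ≤ d → gg x₀ i j ∈ Ter x₀ := by
    intro i j hi hj
    rw [gg_eq]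
    exact Subalgebra.smul_mem _ (mul_mem (mul_mem (tE i hi) (tB d le_rfl)) (tE j hj)) _
  have tP : ∀ i h, i ≤ d → PP x₀ i h ∈ Ter x₀ := by
    intro i h hi
    rw [PP]
    split_ifs with hh
    · exact Subalgebra.smul_mem _ (mul_mem (tE i hi) (tB h (by omega))) _
    · exact tg i i hi hi
  have hrange : Φ.range = Ter x₀ := by
    apply le_antisymm
    · rintro _ ⟨p, rfl⟩
      change Φ p ∈ _
      rw [hΦ]
      refine add_mem (sum_mem fun i _ => sum_mem fun j _ => ?_) (sum_mem fun a _ => ?_)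
      · exact Subalgebra.smul_mem _ (tg i j (hle i) (hle j)) _
      · have := (e a).1.1.2
        exact Subalgebra.smul_mem _ (sub_mem (tP _ _ (by omega)) (tP _ _ (by omega))) _
    · refine Algebra.adjoin_le ?_
      rintro _ (⟨i, rfl⟩ | ⟨i, rfl⟩)
      · obtain ⟨i, hi⟩ := i
        change A d n i ∈ Φ.range
        cases i with
        | zero => rw [A_eq_zero]; exact mB 0 (by omega)
        | succ i => rw [A_eq_succ]; exact sub_mem (mB _ (by omega)) (mB _ (by omega))
      · exact mE i (hle i)
  exact ⟨((AlgEquiv.ofInjective Φ hinj).trans (Subalgebra.equivOfEq _ _ hrange)).symm⟩
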